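/- Let Z and Y be real Banach spaces with dim Y = 1, let L : Z → Y be a continuous linear map, and let C ⊆ Z be a convex subset. Then the restriction L|_C : C → L(C) (with the subspace topologies on C and on L(C)) is an open map. -/

import Mathlib

theorem one_sided_aux {Z : Type*} [NormedAddCommGroup Z] [NormedSpace ℝ Z]
    (f : Z →L[ℝ] ℝ) (C : Set Z) (hC : Convex ℝ C) (x : Z) (hx : x ∈ C) (ε : ℝ) (hε : 0 < ε) :
    ∃ δ > 0, ∀ y ∈ C, f x < f y → f y < f x + δ → ∃ z ∈ C, ‖z - x‖ < ε ∧ f z = f y := by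
  by_cases h : ∃ w ∈ C, f x < f w
  · obtain ⟨w, hw, hlt⟩ := h
    have hd : 0 < f w - f x := sub_pos.2 hlt
    have hn : 0 < ‖w - x‖ + 1 := by positivity
    refine ⟨min (f w - f x) (ε * (f w - f x) / (‖w - x‖ + 1)), by positivity, ?_⟩
    intro y hy h1 h2
    have h3 : f y - f x < f w - f x :=
      lt_of_lt_of_le (by linarith) (min_le_left _ (ε * (f w - f x) / (‖w - x‖ + 1)))
    have h4 : f y - f x < ε * (f w - f x) / (‖w - x‖ + 1) :=
      lt_of_lt_of_le (by linarith) (min_le_right (f w - f x) _)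
    have ht0 : 0 < (f y - f x) / (f w - f x) := div_pos (by linarith) hd
    have ht1 : (f y - f x) / (f w - f x) < 1 := (div_lt_one hd).2 h3
    have ht2 : (f y - f x) / (f w - f x) * (‖w - x‖ + 1) < ε := by
      rw [lt_div_iff₀ hn] at h4
      rw [div_mul_eq_mul_div, div_lt_iff₀ hd]
      exact h4
    have ht3 : (f y - f x) / (f w - f x) * (f w - f x) = f y - f x := div_mul_cancel₀ _ hd.ne'
    generalize (f y - f x) / (f w - f x) = t at *
    refine ⟨x + t • (w - x), hC.add_smul_sub_mem hx hw ⟨ht0.le, ht1.le⟩, ?_, ?_⟩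
    · rw [add_sub_cancel_left, norm_smul, Real.norm_of_nonneg ht0.le]
      linarith
    · simp only [map_add, map_smul, map_sub, smul_eq_mul]
      linarith
  · push Not at h
    exact ⟨1, one_pos, fun y hy h1 _ => absurd (h y hy) (not_le.2 h1)⟩

/-- Auxiliary claim in the proof of Theorem 2.1, (c) ⇒ (a): if `Y` is a one-dimensional
Banach space, then for every continuous linear map `L : Z → Y` and every convex subset
`C ⊆ Z`, the restriction `L|_C : C → L(C)` (with subspace topologies) is an open map. -/
theorem restriction_isOpenMap_of_rank_one
    {Z Y : Type*} [NormedAddCommGroup Z] [NormedSpace ℝ Z] [CompleteSpace Z]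
    [NormedAddCommGroup Y] [NormedSpace ℝ Y] [CompleteSpace Y]
    (hY : Module.rank ℝ Y = 1)
    (L : Z →L[ℝ] Y) (C : Set Z) (hC : Convex ℝ C) :
    IsOpenMap (fun x : ↥C => (⟨L (x : Z), ⟨(x : Z), x.2, rfl⟩⟩ : ↥(⇑L '' C))) := by
  obtain ⟨e⟩ : Nonempty (Y ≃L[ℝ] ℝ) := by
    have h1 : Module.finrank ℝ Y = 1 := Module.rank_eq_one_iff_finrank_eq_one.1 hY
    haveI : FiniteDimensional ℝ Y := Module.finite_of_finrank_pos (by omega)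
    exact FiniteDimensional.nonempty_continuousLinearEquiv_of_finrank_eq (by simp [h1])
  rw [isOpenMap_iff_nhds_le]
  rintro ⟨x, hx⟩ s hs
  rw [Filter.mem_map, Metric.mem_nhds_iff] at hs
  obtain ⟨ε, hε, hs⟩ := hs
  let f : Z →L[ℝ] ℝ := (e : Y →L[ℝ] ℝ).comp L
  obtain ⟨δ₁, hδ₁, H₁⟩ := one_sided_aux f C hC x hx ε hε
  obtain ⟨δ₂, hδ₂, H₂⟩ := one_sided_aux (-f) C hC x hx ε hε
  have hcont : Continuous (fun y : ↥(⇑L '' C) => e (y : Y)) :=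
    e.continuous.comp continuous_subtype_val
  have hmem := hcont.continuousAt.preimage_mem_nhds (x := ⟨L x, ⟨x, hx, rfl⟩⟩)
    (Ioo_mem_nhds (a := e (L x) - δ₂) (b := e (L x) + δ₁) (by simpa using hδ₂)
      (by simpa using hδ₁))
  refine Filter.mem_of_superset hmem ?_
  rintro ⟨_, y, hy, rfl⟩ ⟨ha, hb⟩
  have key : ∃ z ∈ C, ‖z - x‖ < ε ∧ f z = f y := by
    change f x - δ₂ < f y at ha
    change f y < f x + δ₁ at hb
    rcases lt_trichotomy (f x) (f y) with h | h | h
    · exact H₁ y hy h hb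
    · exact ⟨x, hx, by simpa using hε, h⟩
    · obtain ⟨z, hz, hz1, hz2⟩ := H₂ y hy (by simpa using h)
        (by simp only [ContinuousLinearMap.neg_apply]; linarith)
      exact ⟨z, hz, hz1, by simpa using hz2⟩
  obtain ⟨z, hz, hz1, hz2⟩ := key
  have hL : L z = L y := e.injective hz2
  have := @hs ⟨z, hz⟩ (by simpa [Subtype.dist_eq, dist_eq_norm] using hz1)
  simpa [hL] using this
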